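/- Let w be a scalar with |w| = 1 and B_w the map on eventually-zero sequences c₀₀ given by B_w x = w⁻¹(x_{k-1})_{k∈ℕ} (with x₀ := 0). Then for every x ∈ c₀₀, ‖B_wⁿ x‖ ≤ 2‖x‖₁/(n+1) in the X-norm; in particular B_wⁿ x → 0 as n → ∞. -/

import Mathlib

open Filter Topology

/-- The norm of the complex space `X` (0-based: `x k` is the paper's
`x_{k+1}`). -/
noncomputable def normXC (x : ℕ → ℂ) : ℝ :=
  ∑' k : ℕ, ‖x (k + 1) / ((k : ℂ) + 2) - x k / ((k : ℂ) + 1)‖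

/-- `B_wⁿ x = w⁻ⁿ (x_{k-n})` (0-based; entries with index `< n` are `0`). -/
noncomputable def Bpow (w : ℂ) (n : ℕ) (x : ℕ → ℂ) : ℕ → ℂ :=
  fun k => if k < n then 0 else w⁻¹ ^ n * x (k - n)

/-!
By the triangle inequality `‖x‖_X ≤ 2 ∑ |x_k| / k`. The entries of `B_wⁿ x` have modulus at most
those of `x` and are moved `n` places to the right, where every weight `1 / k` is at most
`1 / (n + 1)`.
-/

theorem tsum_norm_succ_sub_le {E : Type*} [SeminormedAddCommGroup E] {u : ℕ → E}
    (hu : Summable fun k => ‖u k‖) : ∑' k, ‖u (k + 1) - u k‖ ≤ 2 * ∑' k, ‖u k‖ := by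
  have hu_succ : Summable fun k => ‖u (k + 1)‖ := (summable_nat_add_iff 1).2 hu
  have htriangle (k : ℕ) : ‖u (k + 1) - u k‖ ≤ ‖u (k + 1)‖ + ‖u k‖ := norm_sub_le _ _
  have htail : ∑' k, ‖u (k + 1)‖ ≤ ∑' k, ‖u k‖ := by
    rw [hu.tsum_eq_zero_add]
    exact le_add_of_nonneg_left (norm_nonneg _)
  calc ∑' k, ‖u (k + 1) - u k‖
      ≤ ∑' k, (‖u (k + 1)‖ + ‖u k‖) :=
        ((hu_succ.add hu).of_nonneg_of_le (fun _ => norm_nonneg _) htriangle).tsum_le_tsum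
          htriangle (hu_succ.add hu)
    _ = ∑' k, ‖u (k + 1)‖ + ∑' k, ‖u k‖ := hu_succ.tsum_add hu
    _ ≤ 2 * ∑' k, ‖u k‖ := by linarith

theorem normXC_nonneg (x : ℕ → ℂ) : 0 ≤ normXC x :=
  tsum_nonneg fun _ => norm_nonneg _

theorem normXC_le_two_mul_tsum {x : ℕ → ℂ} (hx : Summable fun k : ℕ => ‖x k‖ / (k + 1)) :
    normXC x ≤ 2 * ∑' k : ℕ, ‖x k‖ / (k + 1) := by
  have hnorm (k : ℕ) : ‖x k / ((k + 1 : ℕ) : ℂ)‖ = ‖x k‖ / (k + 1) := by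
    rw [norm_div, Complex.norm_natCast, Nat.cast_succ]
  have hdiff : normXC x =
      ∑' k : ℕ, ‖x (k + 1) / ((k + 1 + 1 : ℕ) : ℂ) - x k / ((k + 1 : ℕ) : ℂ)‖ := by
    simp only [normXC, Nat.cast_add, Nat.cast_one, Nat.cast_ofNat, add_assoc,
      Nat.reduceAdd]
  simp only [← hnorm] at hx ⊢
  exact hdiff.trans_le (tsum_norm_succ_sub_le hx)

section Bpow

variable {w : ℂ} {x : ℕ → ℂ} {n k : ℕ}

theorem Bpow_of_lt (hk : k < n) : Bpow w n x k = 0 :=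
  if_pos hk

theorem Bpow_add_right : Bpow w n x (k + n) = w⁻¹ ^ n * x k := by
  simp [Bpow]

theorem norm_Bpow_add_right_le (hw : 1 ≤ ‖w‖) : ‖Bpow w n x (k + n)‖ ≤ ‖x k‖ := by
  rw [Bpow_add_right, norm_mul, norm_pow, norm_inv]
  exact mul_le_of_le_one_left (norm_nonneg _)
    (pow_le_one₀ (inv_nonneg.2 (norm_nonneg w)) (inv_le_one_of_one_le₀ hw))

theorem norm_Bpow_add_right_div_le (hw : 1 ≤ ‖w‖) :
    ‖Bpow w n x (k + n)‖ / ((k + n : ℕ) + 1 : ℝ) ≤ ‖x k‖ / (n + 1) := by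
  gcongr
  · exact norm_Bpow_add_right_le hw
  · exact Nat.le_add_left n k

theorem summable_norm_Bpow_div (hw : 1 ≤ ‖w‖) (hx : Summable fun k => ‖x k‖) :
    Summable fun k : ℕ => ‖Bpow w n x k‖ / (k + 1) :=
  (summable_nat_add_iff n).1 <| (hx.div_const (n + 1 : ℝ)).of_nonneg_of_le
    (fun _ => by positivity) fun _ => norm_Bpow_add_right_div_le hw

theorem tsum_norm_Bpow_div_le (hw : 1 ≤ ‖w‖) (hx : Summable fun k => ‖x k‖) :
    ∑' k : ℕ, ‖Bpow w n x k‖ / (k + 1) ≤ (∑' k, ‖x k‖) / (n + 1) := by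
  have hsummable : Summable fun k : ℕ => ‖Bpow w n x k‖ / (k + 1) := summable_norm_Bpow_div hw hx
  have hhead : ∑ k ∈ Finset.range n, ‖Bpow w n x k‖ / (k + 1 : ℝ) = 0 :=
    Finset.sum_eq_zero fun k hk => by
      rw [Bpow_of_lt (Finset.mem_range.1 hk), norm_zero, zero_div]
  rw [← hsummable.sum_add_tsum_nat_add n, hhead, zero_add, ← tsum_div_const]
  exact ((summable_nat_add_iff n).2 hsummable).tsum_le_tsum
    (fun _ => norm_Bpow_add_right_div_le hw) (hx.div_const _)

theorem normXC_Bpow_le (hw : 1 ≤ ‖w‖) (hx : Summable fun k => ‖x k‖) (n : ℕ) :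
    normXC (Bpow w n x) ≤ 2 * (∑' k, ‖x k‖) / (n + 1) :=
  calc normXC (Bpow w n x)
      ≤ 2 * ∑' k : ℕ, ‖Bpow w n x k‖ / (k + 1) :=
        normXC_le_two_mul_tsum (summable_norm_Bpow_div hw hx)
    _ ≤ 2 * ((∑' k, ‖x k‖) / (n + 1)) := by gcongr; exact tsum_norm_Bpow_div_le hw hx
    _ = 2 * (∑' k, ‖x k‖) / (n + 1) := (mul_div_assoc ..).symm

end Bpow

theorem stmt_15_general (w : ℂ) (hw : 1 ≤ ‖w‖) (x : ℕ → ℂ) (hx : Summable fun k => ‖x k‖) :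
    (∀ n : ℕ, normXC (Bpow w n x) ≤ 2 * (∑' k : ℕ, ‖x k‖) / ((n : ℝ) + 1)) ∧
    Tendsto (fun n : ℕ => normXC (Bpow w n x)) atTop (𝓝 0) := by
  refine ⟨normXC_Bpow_le hw hx, squeeze_zero (fun _ => normXC_nonneg _) (normXC_Bpow_le hw hx) ?_⟩
  exact tendsto_const_nhds.div_atTop
    (tendsto_atTop_add_const_right _ _ tendsto_natCast_atTop_atTop)

/-- For `|w| = 1` and finitely supported `x`, the right-inverse orbit satisfies
`‖B_wⁿ x‖ ≤ 2 ‖x‖₁ / (n+1)` in the `X`-norm; in particular `B_wⁿ x → 0`. -/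
theorem stmt_15 (w : ℂ) (hw : ‖w‖ = 1) (x : ℕ → ℂ)
    (hfin : ∃ N : ℕ, ∀ k, N ≤ k → x k = 0) :
    (∀ n : ℕ, normXC (Bpow w n x) ≤ 2 * (∑' k : ℕ, ‖x k‖) / ((n : ℝ) + 1)) ∧
    Tendsto (fun n : ℕ => normXC (Bpow w n x)) atTop (𝓝 0) := by
  obtain ⟨N, hN⟩ := hfin
  exact stmt_15_general w hw.ge x ((summable_nat_add_iff N).1 (by simp [hN]))
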